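/- For every natural number N ≥ 1 and |q|<1: (1/(q;q)_N) ∑_{n=1}^{N} [N choose n] (-1)^{n-1} n q^{n(n+1)/2}/(1-q^n) + ∑_{n=1}^{N} [N choose n] (q^{n^2}/(q;q)_n) ∑_{k=1}^{n} q^k/(1-q^k)^2 = (1/(q;q)_N) ∑_{n=1}^{∞} n q^n (1-q^{Nn})/(1-q^n). (Finite analogue of Andrews' spt identity, generating-function form.) -/

import Mathlib

open Finset

/-- q-Pochhammer symbol (a;q)_n = ∏_{k=0}^{n-1} (1 - a q^k). -/
noncomputable def qP (a q : ℂ) (n : ℕ) : ℂ := ∏ k ∈ Finset.range n, (1 - a * q ^ k)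

/-- Gaussian (q-)binomial coefficient [N choose n]_q. -/
noncomputable def qBinom (q : ℂ) (N n : ℕ) : ℂ := qP q q N / (qP q q n * qP q q (N - n))

/-- `1 - q ^ (n + 1)` does not vanish inside the unit disc. -/
lemma one_sub_pow_succ_ne_zero {q : ℂ} (hq : ‖q‖ < 1) (n : ℕ) : 1 - q ^ (n + 1) ≠ 0 := by
  intro h
  have h1 : ‖q ^ (n + 1)‖ < 1 := by
    rw [norm_pow]
    exact pow_lt_one₀ (norm_nonneg _) hq (by omega)
  rw [← sub_eq_zero.mp h] at h1
  simp at h1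

lemma qP_self_succ (q : ℂ) (n : ℕ) : qP q q (n + 1) = qP q q n * (1 - q ^ (n + 1)) := by
  rw [qP, qP, prod_range_succ, pow_succ']

lemma qP_self_zero (q : ℂ) : qP q q 0 = 1 := by simp [qP]

lemma qP_self_ne_zero {q : ℂ} (hq : ‖q‖ < 1) (n : ℕ) : qP q q n ≠ 0 := by
  induction n with
  | zero => simp [qP]
  | succ n ih =>
    rw [qP_self_succ]
    exact mul_ne_zero ih (one_sub_pow_succ_ne_zero hq n)

/-- The Gaussian binomial coefficient, extended by zero for `N < n`. -/
noncomputable def qBinomExt (q : ℂ) (N n : ℕ) : ℂ := if n ≤ N then qBinom q N n else 0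

lemma qBinomExt_of_le {q : ℂ} {N n : ℕ} (h : n ≤ N) : qBinomExt q N n = qBinom q N n := if_pos h

lemma qBinomExt_of_lt {q : ℂ} {N n : ℕ} (h : N < n) : qBinomExt q N n = 0 := if_neg (by omega)

lemma qBinomExt_zero_right {q : ℂ} (hq : ‖q‖ < 1) (N : ℕ) : qBinomExt q N 0 = 1 := by
  rw [qBinomExt_of_le (Nat.zero_le N), qBinom, qP_self_zero, Nat.sub_zero, one_mul,
    div_self (qP_self_ne_zero hq N)]

lemma qBinomExt_mul_one_sub_pow {q : ℂ} (hq : ‖q‖ < 1) {N n : ℕ} (h : n ≤ N + 1) :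
    qBinomExt q N n * (1 - q ^ (N + 1)) = (1 - q ^ (N + 1 - n)) * qBinomExt q (N + 1) n := by
  rcases Nat.lt_or_ge N n with hlt | hle
  · obtain rfl : n = N + 1 := by omega
    simp [qBinomExt_of_lt]
  · obtain ⟨m, rfl⟩ := Nat.exists_eq_add_of_le hle
    rw [qBinomExt_of_le hle, qBinomExt_of_le h, qBinom, qBinom,
      show n + m + 1 - n = m + 1 by omega, show n + m - n = m by omega, qP_self_succ,
      qP_self_succ q m]
    have h1 := qP_self_ne_zero hq n
    have h2 := qP_self_ne_zero hq m
    have h3 := one_sub_pow_succ_ne_zero hq m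
    field_simp

lemma qBinomExt_succ_succ {q : ℂ} (hq : ‖q‖ < 1) {N n : ℕ} (h : n ≤ N) :
    qBinomExt q (N + 1) (n + 1) = (1 - q ^ (N + 1)) * qBinomExt q N n / (1 - q ^ (n + 1)) := by
  rw [qBinomExt_of_le h, qBinomExt_of_le (by omega), qBinom, qBinom,
    show N + 1 - (n + 1) = N - n by omega, qP_self_succ, qP_self_succ q n]
  have h1 := qP_self_ne_zero hq n
  have h2 := qP_self_ne_zero hq (N - n)
  have h3 := one_sub_pow_succ_ne_zero hq n
  field_simp

lemma qBinomExt_succ_right {q : ℂ} (hq : ‖q‖ < 1) {N n : ℕ} (h : n ≤ N) :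
    qBinomExt q N (n + 1) = (1 - q ^ (N - n)) * qBinomExt q N n / (1 - q ^ (n + 1)) := by
  have h1 := qBinomExt_mul_one_sub_pow hq (N := N) (n := n + 1) (by omega)
  rw [qBinomExt_succ_succ hq h, show N + 1 - (n + 1) = N - n by omega] at h1
  have h2 := one_sub_pow_succ_ne_zero hq N
  apply mul_right_cancel₀ h2
  rw [h1]
  ring

lemma qBinomExt_pascal {q : ℂ} (hq : ‖q‖ < 1) {N n : ℕ} (h : n ≤ N) :
    qBinomExt q (N + 1) (n + 1) = qBinomExt q N (n + 1) + q ^ (N - n) * qBinomExt q N n := by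
  rw [qBinomExt_succ_succ hq h, qBinomExt_succ_right hq h]
  obtain ⟨m, rfl⟩ := Nat.exists_eq_add_of_le h
  rw [show n + m - n = m by omega]
  have h3 := one_sub_pow_succ_ne_zero hq n
  field_simp
  ring

lemma choose_two_succ (n : ℕ) : (n + 1).choose 2 = n + n.choose 2 := by
  rw [Nat.choose_succ_succ' n 1, Nat.choose_one_right]

/-- Pascal recursion for the sums occurring in the finite `q`-binomial theorem. -/
lemma sum_qBinomExt_succ {q : ℂ} (hq : ‖q‖ < 1) (f : ℕ → ℂ) (N : ℕ) :
    ∑ n ∈ range (N + 2), qBinomExt q (N + 1) n * q ^ n.choose 2 * f n =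
      ∑ n ∈ range (N + 1), qBinomExt q N n * q ^ n.choose 2 * f n +
        q ^ N * ∑ n ∈ range (N + 1), qBinomExt q N n * q ^ n.choose 2 * f (n + 1) := by
  have hext : ∑ n ∈ range (N + 1), qBinomExt q N n * q ^ n.choose 2 * f n =
      ∑ n ∈ range (N + 2), qBinomExt q N n * q ^ n.choose 2 * f n := by
    rw [sum_range_succ _ (N + 1), qBinomExt_of_lt (Nat.lt_succ_self N)]
    simp
  rw [hext, sum_range_succ' _ (N + 1), sum_range_succ' _ (N + 1), qBinomExt_zero_right hq,
    qBinomExt_zero_right hq, mul_sum, add_right_comm, ← sum_add_distrib]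
  congr 1
  refine sum_congr rfl fun n hn => ?_
  have hle : n ≤ N := Nat.lt_succ_iff.mp (mem_range.mp hn)
  rw [qBinomExt_pascal hq hle, choose_two_succ]
  obtain ⟨m, rfl⟩ := Nat.exists_eq_add_of_le hle
  rw [show n + m - n = m by omega]
  ring

/-- The finite `q`-binomial theorem at `z = 1`. -/
lemma sum_qBinomExt_alternating {q : ℂ} (hq : ‖q‖ < 1) (N : ℕ) :
    ∑ n ∈ range (N + 2), qBinomExt q (N + 1) n * q ^ n.choose 2 * (-1) ^ n = 0 := by
  have step : ∀ N, ∑ n ∈ range (N + 2), qBinomExt q (N + 1) n * q ^ n.choose 2 * (-1) ^ n =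
      (1 - q ^ N) * ∑ n ∈ range (N + 1), qBinomExt q N n * q ^ n.choose 2 * (-1) ^ n := by
    intro N
    rw [sum_qBinomExt_succ hq (fun n => (-1) ^ n)]
    simp only [pow_succ, mul_neg, mul_one, sum_neg_distrib]
    ring
  induction N with
  | zero => rw [step]; simp
  | succ N ih => rw [step, ih, mul_zero]

/-- The derivative of the finite `q`-binomial theorem at `z = 1`. -/
lemma sum_qBinomExt_alternating_mul {q : ℂ} (hq : ‖q‖ < 1) (N : ℕ) :
    ∑ n ∈ range (N + 2), qBinomExt q (N + 1) n * q ^ n.choose 2 * (-(-1) ^ n * (n : ℂ)) =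
      qP q q N := by
  have step : ∀ N,
      ∑ n ∈ range (N + 2), qBinomExt q (N + 1) n * q ^ n.choose 2 * (-(-1) ^ n * (n : ℂ)) =
      (1 - q ^ N) *
        ∑ n ∈ range (N + 1), qBinomExt q N n * q ^ n.choose 2 * (-(-1) ^ n * (n : ℂ)) +
      q ^ N * ∑ n ∈ range (N + 1), qBinomExt q N n * q ^ n.choose 2 * (-1) ^ n := by
    intro N
    rw [sum_qBinomExt_succ hq (fun n => -(-1) ^ n * (n : ℂ)), sub_mul, one_mul, sub_add,
      sub_eq_add_neg, neg_sub, ← mul_sub, ← sum_sub_distrib]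
    congr 2
    refine sum_congr rfl fun n _ => ?_
    push_cast
    ring
  induction N with
  | zero => rw [step]; simp [qBinomExt_zero_right hq, qP_self_zero]
  | succ N ih => rw [step, ih, sum_qBinomExt_alternating hq, qP_self_succ]; ring

/-- The alternating sum of the identity, in terms of the extended Gaussian coefficients. -/
noncomputable def alternatingSum (q : ℂ) (N : ℕ) : ℂ :=
  ∑ n ∈ range (N + 1),
    qBinomExt q N n * q ^ (n + 1).choose 2 * (-(-1) ^ n * (n : ℂ)) / (1 - q ^ n)

lemma alternatingSum_succ {q : ℂ} (hq : ‖q‖ < 1) (N : ℕ) :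
    alternatingSum q (N + 1) =
      alternatingSum q N + q ^ (N + 1) / (1 - q ^ (N + 1)) * qP q q N := by
  have hext : alternatingSum q N = ∑ n ∈ range (N + 2),
      qBinomExt q N n * q ^ (n + 1).choose 2 * (-(-1) ^ n * (n : ℂ)) / (1 - q ^ n) := by
    rw [alternatingSum, sum_range_succ _ (N + 1), qBinomExt_of_lt (Nat.lt_succ_self N)]
    simp
  rw [hext, alternatingSum, ← sum_qBinomExt_alternating_mul hq N, mul_sum, ← sum_add_distrib]
  refine sum_congr rfl fun n hn => ?_
  rcases n with _ | n
  · simp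
  have hle : n ≤ N := by have := mem_range.mp hn; omega
  rw [qBinomExt_succ_right hq hle, qBinomExt_succ_succ hq hle, choose_two_succ (n + 1)]
  obtain ⟨m, rfl⟩ := Nat.exists_eq_add_of_le hle
  rw [show n + m - n = m by omega]
  have h1 := one_sub_pow_succ_ne_zero hq n
  have h2 := one_sub_pow_succ_ne_zero hq (n + m)
  field_simp
  ring

/-- The Durfee weights `(q;q)_N [N choose n] q^(n^2) / (q;q)_n`. -/
noncomputable def durfeeWeight (q : ℂ) (N n : ℕ) : ℂ :=
  qP q q N * qBinomExt q N n * q ^ n ^ 2 / qP q q n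

/-- The WZ mate of the Durfee weights. -/
noncomputable def durfeeMate (q : ℂ) (N : ℕ) : ℕ → ℂ
  | 0 => 0
  | n + 1 => q ^ (n ^ 2 + n + N + 1) * qBinomExt q N n * qP q q N / qP q q n

lemma durfeeWeight_sub {q : ℂ} (hq : ‖q‖ < 1) {N n : ℕ} (h : n ≤ N + 1) :
    durfeeWeight q (N + 1) n - durfeeWeight q N n =
      durfeeMate q N n - durfeeMate q N (n + 1) := by
  rcases n with _ | n
  · simp only [durfeeWeight, durfeeMate, qBinomExt_zero_right hq, qP_self_succ, qP_self_zero]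
    ring
  have hle : n ≤ N := by omega
  simp only [durfeeWeight, durfeeMate]
  rw [qBinomExt_succ_right hq hle, qBinomExt_succ_succ hq hle, qP_self_succ, qP_self_succ]
  obtain ⟨m, rfl⟩ := Nat.exists_eq_add_of_le hle
  rw [show n + m - n = m by omega]
  have h1 := one_sub_pow_succ_ne_zero hq n
  have h2 := qP_self_ne_zero hq n
  field_simp
  ring

lemma sum_range_sub_mul (g f : ℕ → ℂ) (M : ℕ) :
    ∑ n ∈ range M, (g n - g (n + 1)) * f n =
      g 0 * f 0 - g M * f M + ∑ n ∈ range M, g (n + 1) * (f (n + 1) - f n) := by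
  induction M with
  | zero => simp
  | succ M ih => rw [sum_range_succ, sum_range_succ, ih]; ring

lemma sum_durfeeWeight_succ {q : ℂ} (hq : ‖q‖ < 1) (f : ℕ → ℂ) (N : ℕ) :
    ∑ n ∈ range (N + 2), durfeeWeight q (N + 1) n * f n =
      ∑ n ∈ range (N + 1), durfeeWeight q N n * f n +
        ∑ n ∈ range (N + 1), durfeeMate q N (n + 1) * (f (n + 1) - f n) := by
  have hlast : durfeeMate q N (N + 2) = 0 := by
    simp [durfeeMate, qBinomExt_of_lt (Nat.lt_succ_self N)]
  have hext : ∑ n ∈ range (N + 1), durfeeWeight q N n * f n =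
      ∑ n ∈ range (N + 2), durfeeWeight q N n * f n := by
    rw [sum_range_succ _ (N + 1), durfeeWeight, qBinomExt_of_lt (Nat.lt_succ_self N)]
    simp
  have hparts := sum_range_sub_mul (durfeeMate q N) f (N + 2)
  rw [sum_range_succ (fun n => durfeeMate q N (n + 1) * (f (n + 1) - f n)), hlast,
    show durfeeMate q N 0 = 0 from rfl] at hparts
  simp only [zero_mul, sub_zero, zero_add, add_zero] at hparts
  rw [hext, ← hparts, ← sum_add_distrib]
  refine sum_congr rfl fun n hn => ?_
  rw [← durfeeWeight_sub hq (Nat.lt_succ_iff.mp (mem_range.mp hn))]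
  ring

/-- The Durfee square identity: the weights sum to one. -/
lemma sum_durfeeWeight {q : ℂ} (hq : ‖q‖ < 1) (N : ℕ) :
    ∑ n ∈ range (N + 1), durfeeWeight q N n = 1 := by
  induction N with
  | zero => simp [durfeeWeight, qBinomExt_zero_right hq, qP_self_zero]
  | succ N ih => simpa [ih] using sum_durfeeWeight_succ hq (fun _ => 1) N

/-- The partial sums `∑_{k=1}^{n} q^k / (1 - q^k)^2`. -/
noncomputable def divisorPartialSum (q : ℂ) (n : ℕ) : ℂ :=
  ∑ k ∈ Icc 1 n, q ^ k / (1 - q ^ k) ^ 2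

lemma divisorPartialSum_zero (q : ℂ) : divisorPartialSum q 0 = 0 := by simp [divisorPartialSum]

lemma divisorPartialSum_succ (q : ℂ) (n : ℕ) :
    divisorPartialSum q (n + 1) =
      divisorPartialSum q n + q ^ (n + 1) / (1 - q ^ (n + 1)) ^ 2 := by
  rw [divisorPartialSum, sum_Icc_succ_top (by omega), divisorPartialSum]

lemma sum_durfeeWeight_mul_divisorPartialSum_succ {q : ℂ} (hq : ‖q‖ < 1) (N : ℕ) :
    ∑ n ∈ range (N + 2), durfeeWeight q (N + 1) n * divisorPartialSum q n =
      ∑ n ∈ range (N + 1), durfeeWeight q N n * divisorPartialSum q n +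
        q ^ (N + 1) / (1 - q ^ (N + 1)) ^ 2 * (1 - qP q q (N + 1)) := by
  have htail : ∑ n ∈ range (N + 1), durfeeWeight q (N + 1) (n + 1) = 1 - qP q q (N + 1) := by
    have h := sum_durfeeWeight hq (N + 1)
    rw [sum_range_succ'] at h
    rw [← h]
    simp [durfeeWeight, qBinomExt_zero_right hq, qP_self_zero]
  rw [sum_durfeeWeight_succ hq, ← htail, mul_sum]
  congr 1
  refine sum_congr rfl fun n hn => ?_
  have hle : n ≤ N := Nat.lt_succ_iff.mp (mem_range.mp hn)
  rw [divisorPartialSum_succ, durfeeMate, durfeeWeight, qBinomExt_succ_succ hq hle, qP_self_succ,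
    qP_self_succ]
  have h1 := one_sub_pow_succ_ne_zero hq n
  have h2 := one_sub_pow_succ_ne_zero hq N
  have h3 := qP_self_ne_zero hq n
  field_simp
  ring

lemma alternatingSum_add_sum_durfeeWeight {q : ℂ} (hq : ‖q‖ < 1) (N : ℕ) :
    alternatingSum q N + ∑ n ∈ range (N + 1), durfeeWeight q N n * divisorPartialSum q n =
      divisorPartialSum q N := by
  induction N with
  | zero => simp [alternatingSum, divisorPartialSum_zero]
  | succ N ih =>
    rw [sum_durfeeWeight_mul_divisorPartialSum_succ hq, alternatingSum_succ hq,
      divisorPartialSum_succ, ← ih, qP_self_succ]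
    have h2 := one_sub_pow_succ_ne_zero hq N
    field_simp
    ring

lemma hasSum_succ_mul_pow_mul_geom {q : ℂ} (hq : ‖q‖ < 1) (N : ℕ) :
    HasSum (fun n : ℕ =>
      ((n : ℂ) + 1) * q ^ (n + 1) * (1 - q ^ (N * (n + 1))) / (1 - q ^ (n + 1)))
      (divisorPartialSum q N) := by
  induction N with
  | zero => simp [divisorPartialSum_zero, hasSum_zero]
  | succ N ih =>
    have hr : ‖q ^ (N + 1)‖ < 1 := by
      rw [norm_pow]
      exact pow_lt_one₀ (norm_nonneg _) hq (by omega)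
    have hgeom : HasSum (fun n : ℕ => ((n + 1 : ℕ) : ℂ) * (q ^ (N + 1)) ^ (n + 1))
        (q ^ (N + 1) / (1 - q ^ (N + 1)) ^ 2) := by
      have h := hasSum_coe_mul_geometric_of_norm_lt_one hr
      rw [← hasSum_nat_add_iff' 1] at h
      simpa using h
    rw [divisorPartialSum_succ]
    convert ih.add hgeom using 2 with n
    have h1 := one_sub_pow_succ_ne_zero hq n
    push_cast
    field_simp
    ring

lemma sum_range_succ_eq_sum_Icc (f : ℕ → ℂ) (hf : f 0 = 0) (N : ℕ) :
    ∑ n ∈ range (N + 1), f n = ∑ n ∈ Icc 1 N, f n := by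
  rw [sum_range_succ', hf, add_zero, range_eq_Ico, sum_Ico_add' f 0 N 1]
  rfl

/-- Finite analogue of Andrews' spt identity, generating-function form. -/
theorem stmt_7 (N : ℕ) (hN : 1 ≤ N) (q : ℂ) (hq : ‖q‖ < 1) :
    (1 / qP q q N) * (∑ n ∈ Finset.Icc 1 N,
        qBinom q N n * ((-1) ^ (n - 1) * (n : ℂ) * q ^ (n * (n + 1) / 2) / (1 - q ^ n))) +
      ∑ n ∈ Finset.Icc 1 N,
        qBinom q N n * (q ^ (n ^ 2) / qP q q n) *
          ∑ k ∈ Finset.Icc 1 n, q ^ k / (1 - q ^ k) ^ 2 =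
      (1 / qP q q N) *
        ∑' n : ℕ, ((n : ℂ) + 1) * q ^ (n + 1) * (1 - q ^ (N * (n + 1))) / (1 - q ^ (n + 1)) := by
  rw [(hasSum_succ_mul_pow_mul_geom hq N).tsum_eq, ← alternatingSum_add_sum_durfeeWeight hq N,
    mul_add, alternatingSum, sum_range_succ_eq_sum_Icc _ (by simp),
    sum_range_succ_eq_sum_Icc _ (by simp [divisorPartialSum_zero])]
  congr 1
  · congr 1
    refine sum_congr rfl fun n hn => ?_
    obtain ⟨h1, h2⟩ := mem_Icc.mp hn
    obtain ⟨k, rfl⟩ := Nat.exists_eq_add_of_le' h1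
    rw [qBinomExt_of_le h2, Nat.choose_two_right, Nat.add_sub_cancel, Nat.add_sub_cancel,
      Nat.mul_comm (k + 1 + 1)]
    ring
  · rw [mul_sum]
    refine sum_congr rfl fun n hn => ?_
    have hQ := qP_self_ne_zero hq N
    rw [durfeeWeight, qBinomExt_of_le (mem_Icc.mp hn).2, divisorPartialSum]
    field_simp
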